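/- arXiv:2502.00324 — 4 statements merged into one kernel-verified Lean document; each statement's English description precedes it below -/
import Mathlib

section
/- Let n ≥ 1 and 0 < m ≤ 1. For all vectors a, b ∈ ℝⁿ one has |J_m(a) − J_m(b)| ≤ 6|a − b|^m, where |·| denotes the Euclidean norm. -/
/-!
Assume `‖b‖ ≤ ‖a‖` by symmetry, with `b ≠ 0`. Split
`J_m(a) - J_m(b) = ‖a‖^(m-1) (a - b) + (‖a‖^(m-1) - ‖b‖^(m-1)) b`.
Since `‖b‖^m ≤ ‖a‖^m`, the second summand has norm
`‖b‖^m - ‖a‖^(m-1) ‖b‖ ≤ ‖a‖^(m-1) (‖a‖ - ‖b‖)`, so both are bounded by `‖a‖^(m-1) ‖a - b‖`.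
As `‖a - b‖ ≤ 2 ‖a‖` and `m - 1 ≤ 0`, this is at most `2 ‖a - b‖^m`
(`rpow_sub_one_mul_le`), which gives the constant `4`.
-/

open MeasureTheory

/-- The nonlinear power `J_m(a) = |a|^{m-1} a` (with `J_m(0) = 0`). -/
noncomputable def Jm (n : ℕ) (m : ℝ) (a : EuclideanSpace ℝ (Fin n)) :
    EuclideanSpace ℝ (Fin n) :=
  ‖a‖ ^ (m - 1) • a

lemma rpow_sub_one_mul_le {m r d : ℝ} (hm0 : 0 < m) (hm1 : m ≤ 1) (hr : 0 < r) (hd : 0 ≤ d)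
    (hdr : d ≤ 2 * r) : r ^ (m - 1) * d ≤ 2 * d ^ m := by
  rcases hd.eq_or_lt with rfl | hd
  · simp [Real.zero_rpow hm0.ne']
  have h1 : (2 * r) ^ (m - 1) ≤ d ^ (m - 1) :=
    Real.rpow_le_rpow_of_nonpos hd hdr (by linarith)
  rw [Real.mul_rpow (by norm_num) hr.le] at h1
  have h2 : (2 : ℝ) ^ (-1 : ℝ) ≤ 2 ^ (m - 1) :=
    Real.rpow_le_rpow_of_exponent_le (by norm_num) (by linarith)
  rw [Real.rpow_neg_one] at h2
  have h3 : 0 < r ^ (m - 1) := Real.rpow_pos_of_pos hr _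
  have h4 : d ^ m = d ^ (m - 1) * d := by
    rw [← Real.rpow_add_one hd.ne', sub_add_cancel]
  rw [h4, ← mul_assoc]
  gcongr
  nlinarith

lemma Jm_sub_le_of_norm_le (n : ℕ) (m : ℝ) (hm0 : 0 < m) (hm1 : m ≤ 1)
    (a b : EuclideanSpace ℝ (Fin n)) (hab : ‖b‖ ≤ ‖a‖) :
    ‖Jm n m a - Jm n m b‖ ≤ 4 * ‖a - b‖ ^ m := by
  -- For `b = 0` and `m < 1` the junk value `0 ^ (m - 1) = 0` breaks monotonicity of the power.
  rcases eq_or_ne b 0 with rfl | hb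
  · rcases eq_or_ne a 0 with rfl | ha
    · simp [Real.zero_rpow hm0.ne']
    have h : ‖Jm n m a - Jm n m 0‖ = ‖a‖ ^ m := by
      have ha' : ‖a‖ ≠ 0 := norm_ne_zero_iff.mpr ha
      rw [Jm, Jm, smul_zero, sub_zero, norm_smul, Real.norm_of_nonneg (by positivity),
        ← Real.rpow_add_one ha', sub_add_cancel]
    rw [h, sub_zero]
    have : 0 ≤ ‖a‖ ^ m := by positivity
    linarith
  have hs : 0 < ‖b‖ := norm_pos_iff.mpr hb
  have hr : 0 < ‖a‖ := hs.trans_le hab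
  have hsplit : Jm n m a - Jm n m b =
      ‖a‖ ^ (m - 1) • (a - b) - (‖b‖ ^ (m - 1) - ‖a‖ ^ (m - 1)) • b := by
    simp only [Jm]
    module
  have hmono : ‖a‖ ^ (m - 1) ≤ ‖b‖ ^ (m - 1) :=
    Real.rpow_le_rpow_of_nonpos hs hab (by linarith)
  have hpow : ‖b‖ ^ (m - 1) * ‖b‖ ≤ ‖a‖ ^ (m - 1) * ‖a‖ := by
    rw [← Real.rpow_add_one hs.ne', ← Real.rpow_add_one hr.ne', sub_add_cancel]
    exact Real.rpow_le_rpow hs.le hab hm0.le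
  have hpos : 0 < ‖a‖ ^ (m - 1) := Real.rpow_pos_of_pos hr _
  have htri : ‖a‖ ^ (m - 1) * (‖a‖ - ‖b‖) ≤ ‖a‖ ^ (m - 1) * ‖a - b‖ :=
    mul_le_mul_of_nonneg_left (norm_sub_norm_le a b) hpos.le
  have hmain := rpow_sub_one_mul_le hm0 hm1 hr (norm_nonneg (a - b))
    (by linarith [norm_sub_le a b])
  have hnorm : ‖Jm n m a - Jm n m b‖ ≤
      ‖a‖ ^ (m - 1) * ‖a - b‖ + (‖b‖ ^ (m - 1) - ‖a‖ ^ (m - 1)) * ‖b‖ := by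
    rw [hsplit]
    refine (norm_sub_le _ _).trans_eq ?_
    rw [norm_smul, norm_smul, Real.norm_of_nonneg hpos.le,
      Real.norm_of_nonneg (sub_nonneg.mpr hmono)]
  linarith

theorem Jm_sub_le_of_le_one (n : ℕ) (hn : 1 ≤ n) (m : ℝ) (hm0 : 0 < m) (hm1 : m ≤ 1)
    (a b : EuclideanSpace ℝ (Fin n)) :
    ‖Jm n m a - Jm n m b‖ ≤ 6 * ‖a - b‖ ^ m := by
  have h4 : ‖Jm n m a - Jm n m b‖ ≤ 4 * ‖a - b‖ ^ m := by
    rcases le_total ‖b‖ ‖a‖ with h | h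
    · exact Jm_sub_le_of_norm_le n m hm0 hm1 a b h
    · rw [norm_sub_rev, norm_sub_rev a b]
      exact Jm_sub_le_of_norm_le n m hm0 hm1 b a h
  have : 0 ≤ ‖a - b‖ ^ m := by positivity
  linarith
end

section
/- Let n ≥ 1 and 0 < m < 1. If a, b ∈ ℝⁿ satisfy |a| ≥ 2|b|, then |a − b| ≥ |a|/2 and |J_m(a) − J_m(b)| ≤ 3|a − b|^m. -/
/-! The triangle inequality gives `‖a - b‖ ≥ ‖a‖ - ‖b‖ ≥ max (‖a‖ / 2) ‖b‖`. As `‖J_m(x)‖ = ‖x‖ ^ m`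
(`norm_Jm`), no cancellation is needed: `‖J_m(a)‖ ≤ 2 ^ m * ‖a - b‖ ^ m ≤ 2 * ‖a - b‖ ^ m` and
`‖J_m(b)‖ ≤ ‖a - b‖ ^ m`. -/

open MeasureTheory

/-- Since `0 < m`, this also covers `a = 0`, where both sides vanish. -/
theorem norm_Jm (n : ℕ) (m : ℝ) (hm0 : 0 < m) (a : EuclideanSpace ℝ (Fin n)) :
    ‖Jm n m a‖ = ‖a‖ ^ m := by
  rcases eq_or_ne a 0 with rfl | ha
  · simp [Jm, Real.zero_rpow hm0.ne']
  · have h : 0 < ‖a‖ := norm_pos_iff.mpr ha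
    rw [Jm, norm_smul, Real.norm_of_nonneg (by positivity), Real.rpow_sub_one h.ne',
      div_mul_cancel₀ _ h.ne']

theorem Jm_sub_le_of_two_smul_le (n : ℕ) (hn : 1 ≤ n) (m : ℝ) (hm0 : 0 < m) (hm1 : m < 1)
    (a b : EuclideanSpace ℝ (Fin n)) (hab : 2 * ‖b‖ ≤ ‖a‖) :
    ‖a‖ / 2 ≤ ‖a - b‖ ∧ ‖Jm n m a - Jm n m b‖ ≤ 3 * ‖a - b‖ ^ m := by
  have h1 : ‖a‖ - ‖b‖ ≤ ‖a - b‖ := norm_sub_norm_le a b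
  refine ⟨by linarith, ?_⟩
  have hA : ‖a‖ ^ m ≤ 2 * ‖a - b‖ ^ m := by
    calc ‖a‖ ^ m ≤ (2 * ‖a - b‖) ^ m :=
          Real.rpow_le_rpow (norm_nonneg _) (by linarith) hm0.le
      _ = 2 ^ m * ‖a - b‖ ^ m := Real.mul_rpow (by norm_num) (norm_nonneg _)
      _ ≤ 2 * ‖a - b‖ ^ m := by
          gcongr
          exact Real.rpow_le_self_of_one_le (by norm_num) hm1.le
  have hB : ‖b‖ ^ m ≤ ‖a - b‖ ^ m :=
    Real.rpow_le_rpow (norm_nonneg _) (by linarith) hm0.le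
  have h2 := norm_sub_le (Jm n m a) (Jm n m b)
  rw [norm_Jm n m hm0, norm_Jm n m hm0] at h2
  linarith
end

section
/- Let n ≥ 1 and 0 < m < 1. If a, b ∈ ℝⁿ satisfy 0 < |b| ≤ |a| < 2|b|, then |J_m(a) − J_m(b)| ≤ 2|b|^{m-1}|a − b|, and consequently |J_m(a) − J_m(b)| ≤ 6|a − b|^m. -/
/-!
Write `r = ‖a‖`, `s = ‖b‖`, `d = ‖a - b‖`. The splitting
`J_m(a) - J_m(b) = s^(m-1) (a - b) + (r^(m-1) - s^(m-1)) a` reduces the first bound to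
`(s^(m-1) - r^(m-1)) r ≤ s^(m-1) (r - s)`, which is `s^m ≤ r^m`, and `r - s ≤ d`.
The second bound follows from the first: `d ≤ r + s ≤ 3 s` gives
`s^(m-1) d = s^(m-1) d^(1-m) d^m ≤ 3^(1-m) d^m ≤ 3 d^m`.
-/

open MeasureTheory

theorem Jm_sub_le_of_comparable (n : ℕ) (hn : 1 ≤ n) (m : ℝ) (hm0 : 0 < m) (hm1 : m < 1)
    (a b : EuclideanSpace ℝ (Fin n)) (hb : 0 < ‖b‖) (hba : ‖b‖ ≤ ‖a‖)
    (hab : ‖a‖ < 2 * ‖b‖) :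
    ‖Jm n m a - Jm n m b‖ ≤ 2 * ‖b‖ ^ (m - 1) * ‖a - b‖ ∧
      ‖Jm n m a - Jm n m b‖ ≤ 6 * ‖a - b‖ ^ m := by
  have ha : 0 < ‖a‖ := hb.trans_le hba
  have h1 : ‖Jm n m a - Jm n m b‖ ≤ 2 * ‖b‖ ^ (m - 1) * ‖a - b‖ := by
    have hsplit : Jm n m a - Jm n m b =
        ‖b‖ ^ (m - 1) • (a - b) + (‖a‖ ^ (m - 1) - ‖b‖ ^ (m - 1)) • a := by
      simp only [Jm, smul_sub, sub_smul]
      abel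
    have hanti : ‖a‖ ^ (m - 1) ≤ ‖b‖ ^ (m - 1) :=
      Real.rpow_le_rpow_of_nonpos hb hba (by linarith)
    have hmono : ‖b‖ ^ m ≤ ‖a‖ ^ m := Real.rpow_le_rpow hb.le hba hm0.le
    have hpa : ‖a‖ ^ (m - 1) * ‖a‖ = ‖a‖ ^ m := by
      rw [← Real.rpow_add_one ha.ne', sub_add_cancel]
    have hpb : ‖b‖ ^ (m - 1) * ‖b‖ = ‖b‖ ^ m := by
      rw [← Real.rpow_add_one hb.ne', sub_add_cancel]
    have hpos : 0 ≤ ‖b‖ ^ (m - 1) := Real.rpow_nonneg hb.le _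
    have hdiff : ‖b‖ ^ (m - 1) * (‖a‖ - ‖b‖) ≤ ‖b‖ ^ (m - 1) * ‖a - b‖ :=
      mul_le_mul_of_nonneg_left (norm_sub_norm_le a b) hpos
    calc ‖Jm n m a - Jm n m b‖
        ≤ ‖‖b‖ ^ (m - 1) • (a - b)‖ + ‖(‖a‖ ^ (m - 1) - ‖b‖ ^ (m - 1)) • a‖ := by
          rw [hsplit]
          exact norm_add_le _ _
      _ = ‖b‖ ^ (m - 1) * ‖a - b‖ + (‖b‖ ^ (m - 1) - ‖a‖ ^ (m - 1)) * ‖a‖ := by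
          rw [norm_smul, norm_smul, Real.norm_of_nonneg hpos,
            Real.norm_of_nonpos (sub_nonpos.2 hanti), neg_sub]
      _ ≤ 2 * ‖b‖ ^ (m - 1) * ‖a - b‖ := by linarith
  refine ⟨h1, h1.trans ?_⟩
  rcases (norm_nonneg (a - b)).eq_or_lt with hd | hd
  · rw [← hd, Real.zero_rpow hm0.ne']
    simp
  · have hd3 : ‖a - b‖ ≤ 3 * ‖b‖ := by linarith [norm_sub_le a b]
    have hpow : ‖a - b‖ ^ (1 - m) ≤ 3 * ‖b‖ ^ (1 - m) := by
      calc ‖a - b‖ ^ (1 - m) ≤ (3 * ‖b‖) ^ (1 - m) :=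
            Real.rpow_le_rpow hd.le hd3 (by linarith)
        _ = 3 ^ (1 - m) * ‖b‖ ^ (1 - m) := Real.mul_rpow (by norm_num) hb.le
        _ ≤ 3 * ‖b‖ ^ (1 - m) := by
            gcongr
            exact Real.rpow_le_self_of_one_le (by norm_num) (by linarith)
    have hcancel : ‖b‖ ^ (m - 1) * ‖b‖ ^ (1 - m) = 1 := by
      rw [← Real.rpow_add hb]
      simp
    have hdm : ‖a - b‖ ^ (1 - m) * ‖a - b‖ ^ m = ‖a - b‖ := by
      rw [← Real.rpow_add hd]
      simp
    calc 2 * ‖b‖ ^ (m - 1) * ‖a - b‖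
        = 2 * ‖b‖ ^ (m - 1) * (‖a - b‖ ^ (1 - m) * ‖a - b‖ ^ m) := by rw [hdm]
      _ ≤ 2 * ‖b‖ ^ (m - 1) * (3 * ‖b‖ ^ (1 - m) * ‖a - b‖ ^ m) := by gcongr
      _ = 6 * (‖b‖ ^ (m - 1) * ‖b‖ ^ (1 - m)) * ‖a - b‖ ^ m := by ring
      _ = 6 * ‖a - b‖ ^ m := by rw [hcancel, mul_one]
end

section
/- Let n ≥ 1, 0 < m ≤ 1, and 1/m ≤ p < ∞. For every measurable function f : ℝⁿ → ℝⁿ and every y ∈ ℝⁿ, one has ‖Δ_y(J_m ∘ f)‖_{L^p(ℝⁿ)} ≤ 6 ‖Δ_y f‖_{L^{mp}(ℝⁿ)}^m, where Δ_y g(x) = g(x+y) − g(x). -/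
/-!
The map `J_m` is `m`-Hölder with constant `4`, and the inequality follows by taking `L^p` norms,
since `‖ |g|^m ‖_{L^p} = ‖g‖_{L^{mp}}^m`.

For the Hölder bound let `‖b‖ ≤ ‖a‖`, `a ≠ 0`, and write
`J_m(a) - J_m(b) = ‖a‖^{m-1} (a - b) + (‖a‖^{m-1} - ‖b‖^{m-1}) b`. The last term has norm
`‖b‖^m - ‖a‖^{m-1} ‖b‖ ≤ ‖a‖^{m-1} (‖a‖ - ‖b‖)`, so the whole is at most
`2 ‖a‖^{m-1} ‖a - b‖`, and `‖a - b‖^{1-m} ≤ (2 ‖a‖)^{1-m} ≤ 2 ‖a‖^{1-m}`.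
-/

open MeasureTheory

/-- Hölder bound for `J_m` when the first argument has the larger norm. -/
lemma norm_Jm_sub_le_of_norm_le (n : ℕ) {m : ℝ} (hm0 : 0 < m) (hm1 : m ≤ 1)
    {a b : EuclideanSpace ℝ (Fin n)} (hba : ‖b‖ ≤ ‖a‖) :
    ‖Jm n m a - Jm n m b‖ ≤ 4 * ‖a - b‖ ^ m := by
  rcases eq_or_ne a 0 with rfl | ha
  · have hb : b = 0 := by simpa using hba
    simp [hb, Real.zero_rpow hm0.ne']
  have hA : 0 < ‖a‖ := norm_pos_iff.mpr ha
  have hpow : ∀ t : ℝ, 0 ≤ t → t ^ (m - 1) * t = t ^ m := fun t ht => by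
    rcases ht.eq_or_lt with rfl | ht
    · simp [Real.zero_rpow hm0.ne']
    · rw [← Real.rpow_add_one ht.ne', sub_add_cancel]
  have hsplit : Jm n m a - Jm n m b
      = ‖a‖ ^ (m - 1) • (a - b) + (‖a‖ ^ (m - 1) - ‖b‖ ^ (m - 1)) • b := by
    simp only [Jm, smul_sub, sub_smul]; abel
  have hmono : ‖b‖ ^ m ≤ ‖a‖ ^ m := Real.rpow_le_rpow (norm_nonneg _) hba hm0.le
  have hsub : ‖a‖ - ‖b‖ ≤ ‖a - b‖ := norm_sub_norm_le a b
  have hc : 0 ≤ ‖a‖ ^ (m - 1) := by positivity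
  have hsecond : ‖(‖a‖ ^ (m - 1) - ‖b‖ ^ (m - 1)) • b‖ ≤ ‖a‖ ^ (m - 1) * ‖a - b‖ := by
    rw [norm_smul, Real.norm_eq_abs]
    rcases eq_or_ne b 0 with rfl | hb
    · simp only [norm_zero, mul_zero]; positivity
    have hle : ‖a‖ ^ (m - 1) ≤ ‖b‖ ^ (m - 1) :=
      Real.rpow_le_rpow_of_nonpos (norm_pos_iff.mpr hb) hba (by linarith)
    rw [abs_of_nonpos (by linarith)]
    have h1 := hpow _ (norm_nonneg a)
    have h2 := hpow _ (norm_nonneg b)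
    have h3 := mul_le_mul_of_nonneg_left hsub hc
    nlinarith
  have htwo : ‖Jm n m a - Jm n m b‖ ≤ 2 * (‖a‖ ^ (m - 1) * ‖a - b‖) := by
    rw [hsplit]
    refine (norm_add_le _ _).trans ?_
    have : ‖‖a‖ ^ (m - 1) • (a - b)‖ = ‖a‖ ^ (m - 1) * ‖a - b‖ := by
      rw [norm_smul, Real.norm_of_nonneg hc]
    linarith
  have hd : ‖a - b‖ = ‖a - b‖ ^ m * ‖a - b‖ ^ (1 - m) := by
    rw [← Real.rpow_add' (norm_nonneg _) (by norm_num), add_sub_cancel, Real.rpow_one]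
  have hd2 : ‖a - b‖ ^ (1 - m) ≤ 2 * ‖a‖ ^ (1 - m) := by
    calc ‖a - b‖ ^ (1 - m) ≤ (2 * ‖a‖) ^ (1 - m) :=
          Real.rpow_le_rpow (norm_nonneg _) (by linarith [norm_sub_le a b]) (by linarith)
      _ = 2 ^ (1 - m) * ‖a‖ ^ (1 - m) := Real.mul_rpow (by norm_num) hA.le
      _ ≤ 2 * ‖a‖ ^ (1 - m) := by
          gcongr
          exact Real.rpow_le_self_of_one_le (by norm_num) (by linarith)
  have hcancel : ‖a‖ ^ (m - 1) * ‖a‖ ^ (1 - m) = 1 := by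
    rw [← Real.rpow_add hA]; simp
  calc ‖Jm n m a - Jm n m b‖ ≤ 2 * (‖a‖ ^ (m - 1) * ‖a - b‖) := htwo
    _ = 2 * (‖a‖ ^ (m - 1) * (‖a - b‖ ^ m * ‖a - b‖ ^ (1 - m))) := by rw [← hd]
    _ ≤ 2 * (‖a‖ ^ (m - 1) * (‖a - b‖ ^ m * (2 * ‖a‖ ^ (1 - m)))) := by gcongr
    _ = 4 * ‖a - b‖ ^ m * (‖a‖ ^ (m - 1) * ‖a‖ ^ (1 - m)) := by ring
    _ = 4 * ‖a - b‖ ^ m := by rw [hcancel, mul_one]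

lemma norm_Jm_sub_le (n : ℕ) {m : ℝ} (hm0 : 0 < m) (hm1 : m ≤ 1)
    (a b : EuclideanSpace ℝ (Fin n)) :
    ‖Jm n m a - Jm n m b‖ ≤ 4 * ‖a - b‖ ^ m := by
  rcases le_total ‖b‖ ‖a‖ with h | h
  · exact norm_Jm_sub_le_of_norm_le n hm0 hm1 h
  · rw [norm_sub_rev, norm_sub_rev a]
    exact norm_Jm_sub_le_of_norm_le n hm0 hm1 h

theorem eLpNorm_difference_Jm_comp_le (n : ℕ) (hn : 1 ≤ n) (m : ℝ)
    (hm0 : 0 < m) (hm1 : m ≤ 1) (p : ℝ) (hp : 1 / m ≤ p)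
    (f : EuclideanSpace ℝ (Fin n) → EuclideanSpace ℝ (Fin n)) (hf : Measurable f)
    (y : EuclideanSpace ℝ (Fin n)) :
    eLpNorm (fun x => Jm n m (f (x + y)) - Jm n m (f x)) (ENNReal.ofReal p) volume
      ≤ 6 * eLpNorm (fun x => f (x + y) - f x) (ENNReal.ofReal (m * p)) volume ^ m := by
  have hexp : ENNReal.ofReal (m * p) = ENNReal.ofReal p * ENNReal.ofReal m := by
    rw [mul_comm, ENNReal.ofReal_mul' hm0.le]
  rw [hexp, ← eLpNorm_norm_rpow _ hm0]
  refine (eLpNorm_le_mul_eLpNorm_of_ae_le_mul (c := 6)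
    (g := fun x => ‖f (x + y) - f x‖ ^ m) (Filter.Eventually.of_forall fun x => ?_) _).trans ?_
  · have h := norm_Jm_sub_le n hm0 hm1 (f (x + y)) (f x)
    have h0 : 0 ≤ ‖f (x + y) - f x‖ ^ m := by positivity
    rw [Real.norm_of_nonneg h0]
    linarith
  · simp
end
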